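/- arXiv:1912.12877 — 9 statements merged into one kernel-verified Lean document; each statement's English description precedes it below -/
import Mathlib

section
/- For all sounds x, y, a, b: if x ∼ a, y ∼ b, and L x y, then L a b. -/
/-- `x` is identical-pitched with `y`: neither is lower-pitched than the other. -/
def Ident {S : Type*} (L : S → S → Prop) (x y : S) : Prop := ¬ L x y ∧ ¬ L y x

/-! Separation says, contrapositively, that `∼` is transitive. Hence if `x ∼ a` and `x` is lower
than `y`, then `a ∼ y` is impossible, as it would give `x ∼ y`; and `y` lower than `a` is
impossible, as it would make `x` lower than `a`. So `a` is lower than `y`; dually on the right. -/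

section

variable {S : Type*} {L : S → S → Prop} {x y a b : S}

theorem Ident.symm (h : Ident L x y) : Ident L y x :=
  And.symm h

theorem isTrans_ident_of_separation
    (separation : ∀ x y z : S, L x y → ¬ (Ident L x z ∧ Ident L y z)) :
    IsTrans S (Ident L) where
  trans x z y hxz hzy :=
    ⟨fun hxy => separation x y z hxy ⟨hxz, hzy.symm⟩,
      fun hyx => separation y x z hyx ⟨hzy.symm, hxz⟩⟩

theorem rel_of_ident_of_rel [IsTrans S L] [IsTrans S (Ident L)]
    (hax : Ident L a x) (hxy : L x y) : L a y := by
  by_contra not_ay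
  have not_ya : ¬ L y a := fun hya => hax.2 (trans_of L hxy hya)
  have ident_xy : Ident L x y := trans_of (Ident L) hax.symm ⟨not_ay, not_ya⟩
  exact ident_xy.1 hxy

theorem rel_of_rel_of_ident [IsTrans S L] [IsTrans S (Ident L)]
    (hxy : L x y) (hyb : Ident L y b) : L x b := by
  by_contra not_xb
  have not_bx : ¬ L b x := fun hbx => hyb.2 (trans_of L hbx hxy)
  have ident_xy : Ident L x y := trans_of (Ident L) ⟨not_xb, not_bx⟩ hyb.symm
  exact ident_xy.1 hxy

end

theorem stmt_0_general {S : Type*} (L : S → S → Prop)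
    (A2 : ∀ x y z : S, L x y → L y z → L x z)
    (A4 : ∀ x y z : S, L x y → ¬ (Ident L x z ∧ Ident L y z)) :
    ∀ x y a b : S, Ident L x a → Ident L y b → L x y → L a b := by
  intro x y a b hxa hyb hxy
  have : IsTrans S L := ⟨A2⟩
  have : IsTrans S (Ident L) := isTrans_ident_of_separation A4
  have hay : L a y := rel_of_ident_of_rel hxa.symm hxy
  exact rel_of_rel_of_ident hay hyb

theorem stmt_0 {S : Type*} (L : S → S → Prop)
    (A1 : ∀ x : S, ¬ L x x)
    (A2 : ∀ x y z : S, L x y → L y z → L x z)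
    (A3 : ∃ x y : S, L x y)
    (A4 : ∀ x y z : S, L x y → ¬ (Ident L x z ∧ Ident L y z))
    (A5a : ∀ x : S, ∃ a b : S, L a x ∧ L x b)
    (A5b : ∀ x y : S, L x y → ∃ a : S, L x a ∧ L a y) :
    ∀ x y a b : S, Ident L x a → Ident L y b → L x y → L a b :=
  stmt_0_general L A2 A4
end

section
/- Sound Separation Property: for every sound θ, the relation 'being on the same side of θ' on {x : ¬(x ∼ θ)} has exactly two equivalence classes, namely the low side {x : L x θ} and the high side {x : L θ x}: both are nonempty, they are disjoint, their union is {x : ¬(x ∼ θ)}, any two sounds in the same one of these two sets are on the same side of θ, and any sound of the low side and any sound of the high side are not on the same side of θ. -/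
/-- `x` is between-pitched `p` and `q`. -/
def Between {S : Type*} (L : S → S → Prop) (x p q : S) : Prop :=
  (L p x ∧ L x q) ∨ (L q x ∧ L x p)

/-- `x` and `y` are on the same side of `θ`. -/
def SameSide {S : Type*} (L : S → S → Prop) (θ x y : S) : Prop :=
  Ident L x y ∨ ¬ Between L θ x y

section

variable {S : Type*} {L : S → S → Prop} {θ x y : S}

theorem not_ident_iff : ¬ Ident L x y ↔ L x y ∨ L y x := by
  rw [Ident, ← not_or, not_not]

theorem not_between_of_rel_left [Std.Asymm L] (hx : L x θ) (hy : L y θ) :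
    ¬ Between L θ x y := by
  rintro (⟨-, hθy⟩ | ⟨-, hθx⟩)
  · exact asymm hy hθy
  · exact asymm hx hθx

theorem not_between_of_rel_right [Std.Asymm L] (hx : L θ x) (hy : L θ y) :
    ¬ Between L θ x y := by
  rintro (⟨hxθ, -⟩ | ⟨hyθ, -⟩)
  · exact asymm hx hxθ
  · exact asymm hy hyθ

theorem not_sameSide_of_rel_of_rel [IsTrans S L] (hx : L x θ) (hy : L θ y) :
    ¬ SameSide L θ x y := by
  rintro (hident | hnot_between)
  · exact hident.1 (trans_of L hx hy)
  · exact hnot_between (Or.inl ⟨hx, hy⟩)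

end

theorem stmt_2_general {S : Type*} (L : S → S → Prop) [IsStrictOrder S L]
    (unbounded : ∀ x : S, ∃ a b : S, L a x ∧ L x b) (θ : S) :
    (∃ x : S, L x θ) ∧ (∃ x : S, L θ x) ∧
    (∀ x : S, ¬ (L x θ ∧ L θ x)) ∧
    (∀ x : S, ¬ Ident L x θ ↔ (L x θ ∨ L θ x)) ∧
    (∀ x y : S, L x θ → L y θ → SameSide L θ x y) ∧
    (∀ x y : S, L θ x → L θ y → SameSide L θ x y) ∧
    (∀ x y : S, L x θ → L θ y → ¬ SameSide L θ x y) := by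
  obtain ⟨a, b, ha, hb⟩ := unbounded θ
  exact ⟨⟨a, ha⟩, ⟨b, hb⟩,
    fun _ h ↦ asymm h.1 h.2,
    fun _ ↦ not_ident_iff,
    fun _ _ hx hy ↦ Or.inr (not_between_of_rel_left hx hy),
    fun _ _ hx hy ↦ Or.inr (not_between_of_rel_right hx hy),
    fun _ _ hx hy ↦ not_sameSide_of_rel_of_rel hx hy⟩

theorem stmt_2 {S : Type*} (L : S → S → Prop)
    (A1 : ∀ x : S, ¬ L x x)
    (A2 : ∀ x y z : S, L x y → L y z → L x z)
    (A3 : ∃ x y : S, L x y)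
    (A4 : ∀ x y z : S, L x y → ¬ (Ident L x z ∧ Ident L y z))
    (A5a : ∀ x : S, ∃ a b : S, L a x ∧ L x b)
    (A5b : ∀ x y : S, L x y → ∃ a : S, L x a ∧ L a y)
    (θ : S) :
    (∃ x : S, L x θ) ∧ (∃ x : S, L θ x) ∧
    (∀ x : S, ¬ (L x θ ∧ L θ x)) ∧
    (∀ x : S, ¬ Ident L x θ ↔ (L x θ ∨ L θ x)) ∧
    (∀ x y : S, L x θ → L y θ → SameSide L θ x y) ∧
    (∀ x y : S, L θ x → L θ y → SameSide L θ x y) ∧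
    (∀ x y : S, L x θ → L θ y → ¬ SameSide L θ x y) := by
  have : IsStrictOrder S L := { irrefl := A1, trans := A2 }
  exact stmt_2_general L A5a θ
end

section
/- Uniqueness of cut sound: let P, Q ⊆ S be nonempty and disjoint with P ∪ Q = S and suppose ¬L q p for every p ∈ P and q ∈ Q. If θ₁ and θ₂ are both cut sounds of {P,Q} — i.e., for i = 1, 2, every x with L x θᵢ lies in P and every x with L θᵢ x lies in Q — then θ₁ ∼ θ₂. -/
/-- `θ` is a cut sound of the pair `P`, `Q`: every sound lower-pitched than `θ` lies in `P` and
every sound that `θ` is lower-pitched than lies in `Q`. That `P` and `Q` form a cut is not part of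
the definition. -/
structure IsCutSound {S : Type*} (L : S → S → Prop) (P Q : Set S) (θ : S) : Prop where
  mem_left : ∀ x : S, L x θ → x ∈ P
  mem_right : ∀ x : S, L θ x → x ∈ Q

theorem IsCutSound.not_rel_of_disjoint {S : Type*} {L : S → S → Prop} {P₁ Q₁ P₂ Q₂ : Set S}
    {θ₁ θ₂ : S} (h₁ : IsCutSound L P₁ Q₁ θ₁) (h₂ : IsCutSound L P₂ Q₂ θ₂)
    (hdense : ∀ x y : S, L x y → ∃ a : S, L x a ∧ L a y) (hdisj : Disjoint P₂ Q₁) :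
    ¬ L θ₁ θ₂ := by
  intro hlt
  obtain ⟨a, hθ₁a, haθ₂⟩ := hdense θ₁ θ₂ hlt
  exact Set.disjoint_left.mp hdisj (h₂.mem_left a haθ₂) (h₁.mem_right a hθ₁a)

theorem stmt_3_general {S : Type*} {L : S → S → Prop} {P Q : Set S} {θ₁ θ₂ : S}
    (hdense : ∀ x y : S, L x y → ∃ a : S, L x a ∧ L a y) (hdisj : Disjoint P Q)
    (h₁ : IsCutSound L P Q θ₁) (h₂ : IsCutSound L P Q θ₂) :
    Ident L θ₁ θ₂ :=
  ⟨h₁.not_rel_of_disjoint h₂ hdense hdisj, h₂.not_rel_of_disjoint h₁ hdense hdisj⟩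

theorem stmt_3 {S : Type*} (L : S → S → Prop)
    (A1 : ∀ x : S, ¬ L x x)
    (A2 : ∀ x y z : S, L x y → L y z → L x z)
    (A3 : ∃ x y : S, L x y)
    (A4 : ∀ x y z : S, L x y → ¬ (Ident L x z ∧ Ident L y z))
    (A5a : ∀ x : S, ∃ a b : S, L a x ∧ L x b)
    (A5b : ∀ x y : S, L x y → ∃ a : S, L x a ∧ L a y)
    (P Q : Set S) (hP : P.Nonempty) (hQ : Q.Nonempty)
    (hdisj : Disjoint P Q) (hunion : P ∪ Q = Set.univ)
    (horder : ∀ p ∈ P, ∀ q ∈ Q, ¬ L q p)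
    (θ₁ θ₂ : S)
    (h₁ : (∀ x : S, L x θ₁ → x ∈ P) ∧ (∀ x : S, L θ₁ x → x ∈ Q))
    (h₂ : (∀ x : S, L x θ₂ → x ∈ P) ∧ (∀ x : S, L θ₂ x → x ∈ Q)) :
    Ident L θ₁ θ₂ :=
  stmt_3_general A5b hdisj ⟨h₁.1, h₁.2⟩ ⟨h₂.1, h₂.2⟩
end

section
/- Symmetry of Congruence: for all sounds a, b, c, d, if C a b c d then C c d a b. -/
/-! Carry `[c, d]` to an interval `[a, b']` with origin `a`. Then `[a, b]` is congruent to
`[a, b']`, and it remains to reverse this congruence of two intervals with a common origin: `b` and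
`b'` are both identical-pitched with one canonical endpoint `m`, so `[a, b']` is congruent to
`[a, m]`, which is congruent to `[a, b]`. -/

namespace Ident

variable {S : Type*} {L : S → S → Prop}

instance [Std.Irrefl L] : Std.Refl (Ident L) :=
  ⟨fun x => ⟨irrefl x, irrefl x⟩⟩

instance : Std.Symm (Ident L) :=
  ⟨fun _ _ => And.symm⟩

end Ident

theorem rel_swap_of_forall_rel_imp {α : Type*} {R E : α → α → Prop} [IsTrans α R] [Std.Refl E]
    [Std.Symm E] (hER : ∀ x y, E x y → R x y) {b b' m : α} (hm : ∀ y, R b y → E m y)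
    (h : R b b') : R b' b :=
  calc
    R b' m := hER _ _ (symm (hm b' h))
    R m b := hER _ _ (hm b (hER _ _ (refl b)))

theorem stmt_4_general {S : Type*} (E : S → S → Prop) [Std.Refl E] [Std.Symm E]
    (C : S → S → S → S → Prop)
    (C1 : ∀ a a' b b' : S, E a a' → E b b' → C a b a' b')
    (C2 : ∀ a b c d e f : S, C a b c d → C c d e f → C a b e f)
    (C3 : ∀ x y a : S, ∃ b : S, C x y a b ∧ ∀ b' : S, C x y a b' → E b b')
    (a b c d : S) (h : C a b c d) : C c d a b := by
  obtain ⟨b', cd_ab', -⟩ := C3 c d a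
  obtain ⟨m, -, m_unique⟩ := C3 a b a
  have : IsTrans S (C a · a ·) := ⟨fun _ _ _ => C2 _ _ _ _ _ _⟩
  have ab_ab' : C a b a b' := C2 _ _ _ _ _ _ h cd_ab'
  have ab'_ab : C a b' a b :=
    rel_swap_of_forall_rel_imp (R := (C a · a ·)) (fun _ _ => C1 _ _ _ _ (refl a)) m_unique ab_ab'
  exact C2 _ _ _ _ _ _ cd_ab' ab'_ab

theorem stmt_4 {S : Type*} (L : S → S → Prop) (C : S → S → S → S → Prop)
    (A1 : ∀ x : S, ¬ L x x)
    (A2 : ∀ x y z : S, L x y → L y z → L x z)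
    (A3 : ∃ x y : S, L x y)
    (A4 : ∀ x y z : S, L x y → ¬ (Ident L x z ∧ Ident L y z))
    (A5a : ∀ x : S, ∃ a b : S, L a x ∧ L x b)
    (A5b : ∀ x y : S, L x y → ∃ a : S, L x a ∧ L a y)
    (C1 : ∀ a a' b b' : S, Ident L a a' → Ident L b b' → C a b a' b')
    (C2 : ∀ a b c d e f : S, C a b c d → C c d e f → C a b e f)
    (C3 : ∀ x y a : S, ∃ b : S, C x y a b ∧ ∀ b' : S, C x y a b' → Ident L b b')
    (C4a : ∀ a b c d : S, L a b → C a b c d → L c d)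
    (C4b : ∀ a b c d : S, L a b → (C a b c d ↔ C b a d c))
    (C5a : ∀ a b c a' b' c' : S, L a b → L b c → C a b a' b' → C b c b' c' → C a c a' c')
    (C5b : ∀ a b c a' b' c' : S, L a b → L b c → C a b b' a' → C b c c' b' → C a c c' a') :
    ∀ a b c d : S, C a b c d → C c d a b := by
  have : Std.Irrefl L := ⟨A1⟩
  exact stmt_4_general (Ident L) C C1 C2 C3
end

section
/- If C a b c d, then a ∼ c if and only if b ∼ d. -/
/-! Motion makes the right end of an interval depend, up to identity of pitch, only on the
congruence class of the interval and on its left end; hence `a ∼ c` implies `b ∼ d`. The same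
argument applied to the reversed congruence `C b a d c` gives the converse. As congruence is
symmetric, again by Motion, Regularity provides the reversal as soon as one of the two intervals is
nondegenerate; if both are degenerate, then `a ∼ b ∼ d ∼ c`. -/

theorem ident_equivalence {S : Type*} {L : S → S → Prop} (irrefl : ∀ x, ¬ L x x)
    (separation : ∀ x y z, L x y → ¬ (Ident L x z ∧ Ident L y z)) :
    Equivalence (Ident L) where
  refl x := ⟨irrefl x, irrefl x⟩
  symm h := h.symm
  trans {x y z} hxy hyz :=
    ⟨fun h => separation x z y h ⟨hxy, hyz.symm⟩, fun h => separation z x y h ⟨hyz.symm, hxy⟩⟩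

theorem congr_reverse_of_not_ident {S : Type*} {L : S → S → Prop} {C : S → S → S → S → Prop}
    (regularity : ∀ a b c d, L a b → (C a b c d ↔ C b a d c)) {a b c d : S}
    (hab : ¬ Ident L a b) (h : C a b c d) : C b a d c := by
  obtain hlt | hgt : L a b ∨ L b a := by rwa [Ident, ← not_or, not_not] at hab
  · exact (regularity a b c d hlt).1 h
  · exact (regularity b a d c hgt).2 h

/-- Congruence of the intervals `[a, b]`, whose endpoints are taken up to the equivalence relation
`r` (identity of pitch): the axioms of Reflexivity, Transitivity and Motion. -/
structure IntervalCongruence {S : Type*} (r : S → S → Prop) (C : S → S → S → S → Prop) :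
    Prop where
  equivalence : Equivalence r
  of_rel : ∀ {a a' b b'}, r a a' → r b b' → C a b a' b'
  trans : ∀ {a b c d e f}, C a b c d → C c d e f → C a b e f
  motion : ∀ x y a, ∃ b, C x y a b ∧ ∀ b', C x y a b' → r b b'

namespace IntervalCongruence

variable {S : Type*} {r : S → S → Prop} {C : S → S → S → S → Prop} {a b c d : S}

theorem rel_right_of_rel_left (hC : IntervalCongruence r C) (h : C a b c d) (hac : r a c) :
    r b d := by
  obtain ⟨e, -, he⟩ := hC.motion a b c
  have heb : r e b := he b (hC.of_rel hac (hC.equivalence.refl b))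
  exact hC.equivalence.trans (hC.equivalence.symm heb) (he d h)

theorem symm (hC : IntervalCongruence r C) (h : C a b c d) : C c d a b := by
  obtain ⟨e, hcdae, -⟩ := hC.motion c d a
  have hbe : r b e := hC.rel_right_of_rel_left (hC.trans h hcdae) (hC.equivalence.refl a)
  exact hC.trans hcdae (hC.of_rel (hC.equivalence.refl a) (hC.equivalence.symm hbe))

theorem rel_left_of_rel_right (hC : IntervalCongruence r C)
    (reverse : ∀ {a b c d}, ¬ r a b → C a b c d → C b a d c) (h : C a b c d) (hbd : r b d) :
    r a c := by
  have hdb : r d b := hC.equivalence.symm hbd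
  by_cases hab : r a b
  · by_cases hcd : r c d
    · exact hC.equivalence.trans hab (hC.equivalence.trans hbd (hC.equivalence.symm hcd))
    · exact hC.equivalence.symm (hC.rel_right_of_rel_left (reverse hcd (hC.symm h)) hdb)
  · exact hC.rel_right_of_rel_left (reverse hab h) hbd

end IntervalCongruence

theorem stmt_5_general {S : Type*} {r : S → S → Prop} {C : S → S → S → S → Prop}
    (hC : IntervalCongruence r C) (reverse : ∀ {a b c d}, ¬ r a b → C a b c d → C b a d c)
    {a b c d : S} (h : C a b c d) : r a c ↔ r b d :=
  ⟨hC.rel_right_of_rel_left h, hC.rel_left_of_rel_right reverse h⟩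

theorem stmt_5 {S : Type*} (L : S → S → Prop) (C : S → S → S → S → Prop)
    (A1 : ∀ x : S, ¬ L x x)
    (A2 : ∀ x y z : S, L x y → L y z → L x z)
    (A3 : ∃ x y : S, L x y)
    (A4 : ∀ x y z : S, L x y → ¬ (Ident L x z ∧ Ident L y z))
    (A5a : ∀ x : S, ∃ a b : S, L a x ∧ L x b)
    (A5b : ∀ x y : S, L x y → ∃ a : S, L x a ∧ L a y)
    (C1 : ∀ a a' b b' : S, Ident L a a' → Ident L b b' → C a b a' b')
    (C2 : ∀ a b c d e f : S, C a b c d → C c d e f → C a b e f)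
    (C3 : ∀ x y a : S, ∃ b : S, C x y a b ∧ ∀ b' : S, C x y a b' → Ident L b b')
    (C4a : ∀ a b c d : S, L a b → C a b c d → L c d)
    (C4b : ∀ a b c d : S, L a b → (C a b c d ↔ C b a d c))
    (C5a : ∀ a b c a' b' c' : S, L a b → L b c → C a b a' b' → C b c b' c' → C a c a' c')
    (C5b : ∀ a b c a' b' c' : S, L a b → L b c → C a b b' a' → C b c c' b' → C a c c' a') :
    ∀ a b c d : S, C a b c d → (Ident L a c ↔ Ident L b d) :=
  fun _ _ _ _ => stmt_5_general ⟨ident_equivalence A1 A4, C1 _ _ _ _, C2 _ _ _ _ _ _, C3⟩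
    (congr_reverse_of_not_ident C4b)
end

section
/- For all sounds a, b, a', b': C a b a' b' if and only if C a a' b b'. -/
/-!
Euclid's *alternando* for intervals, with `≅` for congruence. Let `L a b`, `L a a'` and
`[a, b] ≅ [a', b']`, and move `[a, a']` to an interval `[b, x]`. Then `[a, b] ≅ [a', b']` and
`[b, x] ≅ [a, a']`, so adding in reversed order gives `[a, x] ≅ [a, b']`. An endpoint is unique up
to pitch, hence `x ∼ b'` and `[a, a'] ≅ [b, b']`. The other signs reduce to this case: exchanging
the two intervals changes the sign of `[a, a']`, and reversing both changes the sign of `[a, b]`.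
Null intervals are all congruent.
-/

namespace Ident

variable {S : Type*} {L : S → S → Prop}

theorem equivalence (irrefl : ∀ x, ¬ L x x)
    (separation : ∀ x y z, L x y → ¬ (Ident L x z ∧ Ident L y z)) : Equivalence (Ident L) where
  refl x := ⟨irrefl x, irrefl x⟩
  symm h := ⟨h.2, h.1⟩
  trans {x y z} hxy hyz :=
    have hzy : Ident L z y := ⟨hyz.2, hyz.1⟩
    ⟨fun hxz => separation x z y hxz ⟨hxy, hzy⟩, fun hzx => separation z x y hzx ⟨hzy, hxy⟩⟩

theorem lower_or_ident_or_lower (L : S → S → Prop) (a b : S) : L a b ∨ Ident L a b ∨ L b a := by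
  unfold Ident
  tauto

end Ident

/-- A congruence of intervals `[a, b]` whose endpoints are regarded up to an equivalence relation
`E`: it is compatible with `E`, transitive, and every interval can be moved to any initial point,
with a final point unique up to `E`. -/
structure MotionCongruence {S : Type*} (E : S → S → Prop) (C : S → S → S → S → Prop) : Prop where
  equiv : Equivalence E
  of_equiv {a a' b b' : S} : E a a' → E b b' → C a b a' b'
  trans {a b c d e f : S} : C a b c d → C c d e f → C a b e f
  motion (x y a : S) : ∃ b, C x y a b ∧ ∀ b', C x y a b' → E b b'

namespace MotionCongruence

variable {S : Type*} {E : S → S → Prop} {C : S → S → S → S → Prop} {a b b' c d x y : S}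

theorem refl (hC : MotionCongruence E C) (a b : S) : C a b a b :=
  hC.of_equiv (hC.equiv.refl a) (hC.equiv.refl b)

theorem endpoint_unique (hC : MotionCongruence E C) (h : C x y a b) (h' : C x y a b') :
    E b b' := by
  obtain ⟨e, -, unique⟩ := hC.motion x y a
  exact hC.equiv.trans (hC.equiv.symm (unique b h)) (unique b' h')

theorem congr_endpoint (hC : MotionCongruence E C) (h : C x y a b) (hb : E b b') : C x y a b' :=
  hC.trans h (hC.of_equiv (hC.equiv.refl a) hb)

theorem symm (hC : MotionCongruence E C) (h : C a b c d) : C c d a b := by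
  obtain ⟨e, he, -⟩ := hC.motion c d a
  have heb : E e b := hC.endpoint_unique (hC.trans h he) (hC.refl a b)
  exact hC.congr_endpoint he heb

end MotionCongruence

/-- A congruence of intervals, with endpoints up to identity of pitch, that is regular with respect
to the pitch order `L`: it preserves ascending intervals, and an ascending interval is congruent to
another interval exactly when their reversals are congruent. -/
structure RegularCongruence {S : Type*} (L : S → S → Prop) (C : S → S → S → S → Prop) : Prop
    extends MotionCongruence (Ident L) C where
  lower_of_lower {a b c d : S} : L a b → C a b c d → L c d
  reverse_iff_of_lower {a b c d : S} : L a b → (C a b c d ↔ C b a d c)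

/-- Addition of adjacent ascending intervals in reversed order: if `[a, b]` and `[b, c]` are
congruent to `[b', a']` and `[c', b']`, then `[a, c]` is congruent to `[c', a']`. -/
def ReverseAdditive {S : Type*} (L : S → S → Prop) (C : S → S → S → S → Prop) : Prop :=
  ∀ a b c a' b' c' : S, L a b → L b c → C a b b' a' → C b c c' b' → C a c c' a'

namespace RegularCongruence

variable {S : Type*} {L : S → S → Prop} {C : S → S → S → S → Prop} {a b a' b' c d : S}

theorem lower_iff (hC : RegularCongruence L C) (h : C a b c d) : L a b ↔ L c d :=
  ⟨fun hab => hC.lower_of_lower hab h, fun hcd => hC.lower_of_lower hcd (hC.symm h)⟩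

theorem higher_of_higher (hC : RegularCongruence L C) (h : C a b c d) (hba : L b a) : L d c :=
  hC.lower_of_lower hba ((hC.reverse_iff_of_lower hba).2 h)

theorem higher_iff (hC : RegularCongruence L C) (h : C a b c d) : L b a ↔ L d c :=
  ⟨hC.higher_of_higher h, hC.higher_of_higher (hC.symm h)⟩

theorem ident_iff (hC : RegularCongruence L C) (h : C a b c d) : Ident L a b ↔ Ident L c d :=
  and_congr (not_congr (hC.lower_iff h)) (not_congr (hC.higher_iff h))

theorem of_ident_of_ident (hC : RegularCongruence L C) (hab : Ident L a b) (hcd : Ident L c d) :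
    C a b c d := by
  obtain ⟨x, hx, -⟩ := hC.motion a b c
  have hcx : Ident L c x := (hC.ident_iff hx).1 hab
  exact hC.congr_endpoint hx (hC.equiv.trans (hC.equiv.symm hcx) hcd)

theorem reverse (hC : RegularCongruence L C) (h : C a b c d) : C b a d c := by
  rcases Ident.lower_or_ident_or_lower L a b with hab | hab | hba
  · exact (hC.reverse_iff_of_lower hab).1 h
  · exact hC.of_ident_of_ident (hC.equiv.symm hab) (hC.equiv.symm ((hC.ident_iff h).1 hab))
  · exact (hC.reverse_iff_of_lower hba).2 h

theorem alternate_of_ident (hC : RegularCongruence L C) (haa' : Ident L a a') (h : C a b a' b') :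
    C a a' b b' := by
  have hbb' : Ident L b b' := hC.endpoint_unique (hC.of_equiv haa' (hC.equiv.refl b)) h
  exact hC.of_ident_of_ident haa' hbb'

theorem alternate_of_lower_of_lower (hC : RegularCongruence L C) (hadd : ReverseAdditive L C)
    (hab : L a b) (haa' : L a a') (h : C a b a' b') : C a a' b b' := by
  obtain ⟨x, hx, -⟩ := hC.motion a a' b
  have hbx : L b x := hC.lower_of_lower haa' hx
  have hsum : C a x a b' := hadd a b x b' a' a hab hbx h (hC.symm hx)
  exact hC.congr_endpoint hx (hC.endpoint_unique (hC.refl a x) hsum)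

theorem alternate_of_lower (hC : RegularCongruence L C) (hadd : ReverseAdditive L C)
    (hab : L a b) (h : C a b a' b') : C a a' b b' := by
  rcases Ident.lower_or_ident_or_lower L a a' with haa' | haa' | ha'a
  · exact hC.alternate_of_lower_of_lower hadd hab haa' h
  · exact hC.alternate_of_ident haa' h
  · have ha'b' : L a' b' := hC.lower_of_lower hab h
    exact hC.reverse (hC.alternate_of_lower_of_lower hadd ha'b' ha'a (hC.symm h))

theorem alternate (hC : RegularCongruence L C) (hadd : ReverseAdditive L C) (h : C a b a' b') :
    C a a' b b' := by
  rcases Ident.lower_or_ident_or_lower L a b with hab | hab | hba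
  · exact hC.alternate_of_lower hadd hab h
  · exact hC.of_equiv hab ((hC.ident_iff h).1 hab)
  · exact hC.symm (hC.alternate_of_lower hadd hba (hC.reverse h))

end RegularCongruence

theorem stmt_6_general {S : Type*} {L : S → S → Prop} {C : S → S → S → S → Prop}
    (hC : RegularCongruence L C) (hadd : ReverseAdditive L C) (a b a' b' : S) :
    C a b a' b' ↔ C a a' b b' :=
  ⟨hC.alternate hadd, hC.alternate hadd⟩

theorem stmt_6 {S : Type*} (L : S → S → Prop) (C : S → S → S → S → Prop)
    (A1 : ∀ x : S, ¬ L x x)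
    (A2 : ∀ x y z : S, L x y → L y z → L x z)
    (A3 : ∃ x y : S, L x y)
    (A4 : ∀ x y z : S, L x y → ¬ (Ident L x z ∧ Ident L y z))
    (A5a : ∀ x : S, ∃ a b : S, L a x ∧ L x b)
    (A5b : ∀ x y : S, L x y → ∃ a : S, L x a ∧ L a y)
    (C1 : ∀ a a' b b' : S, Ident L a a' → Ident L b b' → C a b a' b')
    (C2 : ∀ a b c d e f : S, C a b c d → C c d e f → C a b e f)
    (C3 : ∀ x y a : S, ∃ b : S, C x y a b ∧ ∀ b' : S, C x y a b' → Ident L b b')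
    (C4a : ∀ a b c d : S, L a b → C a b c d → L c d)
    (C4b : ∀ a b c d : S, L a b → (C a b c d ↔ C b a d c))
    (C5a : ∀ a b c a' b' c' : S, L a b → L b c → C a b a' b' → C b c b' c' → C a c a' c')
    (C5b : ∀ a b c a' b' c' : S, L a b → L b c → C a b b' a' → C b c c' b' → C a c c' a') :
    ∀ a b a' b' : S, C a b a' b' ↔ C a a' b b' := by
  have hC : RegularCongruence L C :=
    ⟨⟨Ident.equivalence A1 A4, C1 _ _ _ _, C2 _ _ _ _ _ _, C3⟩, C4a _ _ _ _, C4b _ _ _ _⟩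
  exact stmt_6_general hC C5b
end

section
/- Existence of Midsound: for all sounds a, b there exists a sound m with C a m m b. -/
/-!
Choose `a` as origin and put `x + y = z` when `[a, x]` is congruent to `[y, z]`. Up to identity of
pitch this makes the sounds a linearly ordered abelian group, because congruence identifies an
interval `[x, y]` with the translation of pitch that carries `x` to `y`: the Addition axiom composes
translations, and its crossed form makes them commute. A midsound of `[a, b]` is then a solution of
`2m = b`. It is the boundary point `θ` of the cut `{x | 2x < b}`: by density, a discrepancy between
`2θ` and `b` would exceed `2δ` for some `δ > 0`, and `θ + δ` or `θ - δ` would be on the wrong side.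
-/

/-- Dedekind continuity of an order: every partition into a nonempty lower part `P` and a nonempty
upper part `Q` has a boundary point, which may lie in either part. -/
def DedekindContinuous (α : Type*) [LT α] : Prop :=
  ∀ P Q : Set α, P.Nonempty → Q.Nonempty → Disjoint P Q → P ∪ Q = Set.univ →
    (∀ p ∈ P, ∀ q ∈ Q, ¬ q < p) → ∃ θ, (∀ x, x < θ → x ∈ P) ∧ (∀ x, θ < x → x ∈ Q)

theorem DedekindContinuous.exists_nsmul_eq {G : Type*} [AddCommGroup G] [LinearOrder G]
    [IsOrderedAddMonoid G] [DenselyOrdered G] (hG : DedekindContinuous G) {n : ℕ} (hn : n ≠ 0)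
    (b : G) : ∃ m, n • m = b := by
  by_contra! hb
  have abs_le_nsmul : |b| ≤ n • |b| := le_self_nsmul (abs_nonneg b) hn
  obtain ⟨θ, below, above⟩ := hG {x | n • x < b} {x | b < n • x}
    ⟨-|b|, lt_of_le_of_ne
      (by rw [smul_neg]; exact (neg_le_neg abs_le_nsmul).trans (neg_abs_le b)) (hb _)⟩
    ⟨|b|, lt_of_le_of_ne ((le_abs_self b).trans abs_le_nsmul) (hb _).symm⟩
    (Set.disjoint_left.2 fun _ => lt_asymm)
    (Set.eq_univ_of_forall fun x => (hb x).lt_or_gt)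
    (fun p hp q hq hqp => (hq.trans_le (nsmul_le_nsmul_right hqp.le n)).not_gt hp)
  rcases (hb θ).lt_or_gt with h | h
  · obtain ⟨δ, δ_pos, hδ⟩ := exists_nsmul_lt_of_pos (sub_pos.2 h) n
    refine lt_asymm (above (θ + δ) (lt_add_of_pos_right θ δ_pos)) ?_
    rwa [nsmul_add, ← lt_sub_iff_add_lt']
  · obtain ⟨δ, δ_pos, hδ⟩ := exists_nsmul_lt_of_pos (sub_pos.2 h) n
    refine lt_asymm (below (θ - δ) (sub_lt_self θ δ_pos)) ?_
    rwa [nsmul_sub, lt_sub_comm]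

section Antisymmetrization

variable {S : Type*} [Preorder S]

theorem antisymmRel_ofAntisymmetrization_toAntisymmetrization (a : S) :
    AntisymmRel (· ≤ ·) (ofAntisymmetrization (· ≤ ·) (toAntisymmetrization (· ≤ ·) a)) a :=
  Quotient.exact (toAntisymmetrization_ofAntisymmetrization _ _)

theorem denselyOrdered_antisymmetrization [DenselyOrdered S] :
    DenselyOrdered (Antisymmetrization S (· ≤ ·)) where
  dense := by
    rintro ⟨x⟩ ⟨y⟩ hxy
    obtain ⟨z, hxz, hzy⟩ := exists_between (α := S) hxy
    exact ⟨toAntisymmetrization _ z, hxz, hzy⟩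

theorem DedekindContinuous.antisymmetrization (hS : DedekindContinuous S) :
    DedekindContinuous (Antisymmetrization S (· ≤ ·)) := by
  intro P Q hP hQ hdisj hunion hPQ
  have surj : Function.Surjective (toAntisymmetrization (α := S) (· ≤ ·)) := Quotient.mk_surjective
  obtain ⟨θ, below, above⟩ := hS (toAntisymmetrization _ ⁻¹' P) (toAntisymmetrization _ ⁻¹' Q)
    (hP.preimage surj) (hQ.preimage surj) (hdisj.preimage _)
    (by rw [← Set.preimage_union, hunion, Set.preimage_univ])
    (fun p hp q hq => hPQ _ hp _ hq)
  exact ⟨toAntisymmetrization _ θ, surj.forall.2 below, surj.forall.2 above⟩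

end Antisymmetrization

/-- The congruence axioms for intervals, `C a b c d` meaning that `[a, b]` is congruent to `[c, d]`.
They are stated over a preorder, where identity of pitch is `AntisymmRel (· ≤ ·)`, so that they
apply both to the sounds and to their pitches. -/
structure IsIntervalCongruence {X : Type*} [Preorder X] (C : X → X → X → X → Prop) : Prop where
  of_antisymmRel {a a' b b' : X} :
    AntisymmRel (· ≤ ·) a a' → AntisymmRel (· ≤ ·) b b' → C a b a' b'
  trans {a b c d e f : X} : C a b c d → C c d e f → C a b e f
  motion (x y a : X) : ∃ b, C x y a b ∧ ∀ b', C x y a b' → AntisymmRel (· ≤ ·) b b'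
  lt_of_lt {a b c d : X} : a < b → C a b c d → c < d
  reverse_iff {a b c d : X} : a < b → (C a b c d ↔ C b a d c)
  add {a b c a' b' c' : X} : a < b → b < c → C a b a' b' → C b c b' c' → C a c a' c'
  add_crossed {a b c a' b' c' : X} : a < b → b < c → C a b b' a' → C b c c' b' → C a c c' a'

namespace IsIntervalCongruence

section PartialOrder

variable {X : Type*} [PartialOrder X] {C : X → X → X → X → Prop} (hC : IsIntervalCongruence C)

include hC

theorem refl (a b : X) : C a b a b := hC.of_antisymmRel .rfl .rfl

theorem right_unique {x y a b b' : X} (h : C x y a b) (h' : C x y a b') : b = b' := by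
  obtain ⟨c, -, hc⟩ := hC.motion x y a
  exact (hc b h).eq.symm.trans (hc b' h').eq

theorem symm {a b c d : X} (h : C a b c d) : C c d a b := by
  obtain ⟨b', hb', -⟩ := hC.motion c d a
  rwa [hC.right_unique (hC.refl a b) (hC.trans h hb')]

end PartialOrder

section LinearOrder

variable {X : Type*} [LinearOrder X] {C : X → X → X → X → Prop} (hC : IsIntervalCongruence C)

include hC

theorem eq_of_null {a c d : X} (h : C a a c d) : c = d := by
  rcases lt_trichotomy c d with hcd | rfl | hdc
  · exact absurd (hC.lt_of_lt hcd (hC.symm h)) (lt_irrefl a)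
  · rfl
  · exact absurd (hC.lt_of_lt hdc ((hC.reverse_iff hdc).2 (hC.symm h))) (lt_irrefl a)

theorem reverse {a b c d : X} (h : C a b c d) : C b a d c := by
  rcases lt_trichotomy a b with hab | rfl | hba
  · exact (hC.reverse_iff hab).1 h
  · obtain rfl := hC.eq_of_null h
    exact h
  · exact (hC.reverse_iff hba).2 h

/-- The translation of pitch by the interval `[x, y]`: it carries `a` to the `b` for which `[a, b]`
is congruent to `[x, y]`. -/
noncomputable def shift (x y : X) : Equiv.Perm X where
  toFun a := (hC.motion x y a).choose
  invFun a := (hC.motion y x a).choose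
  left_inv a := hC.right_unique (hC.motion y x _).choose_spec.1
    (hC.reverse (hC.motion x y a).choose_spec.1)
  right_inv a := hC.right_unique (hC.motion x y _).choose_spec.1
    (hC.reverse (hC.motion y x a).choose_spec.1)

theorem shift_apply_eq_iff {x y a b : X} : hC.shift x y a = b ↔ C x y a b := by
  have h : C x y a (hC.shift x y a) := (hC.motion x y a).choose_spec.1
  exact ⟨fun hb => hb ▸ h, hC.right_unique h⟩

theorem shift_spec (x y a : X) : C x y a (hC.shift x y a) := hC.shift_apply_eq_iff.1 rfl

theorem shift_apply_left (x y : X) : hC.shift x y x = y := hC.shift_apply_eq_iff.2 (hC.refl x y)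

theorem shift_inv (x y : X) : (hC.shift x y)⁻¹ = hC.shift y x := rfl

theorem shift_congr {a b c d : X} (h : C a b c d) : hC.shift a b = hC.shift c d :=
  Equiv.ext fun t => hC.shift_apply_eq_iff.2 (hC.trans h (hC.shift_spec c d t))

theorem shift_self (x : X) : hC.shift x x = 1 :=
  Equiv.ext fun t => (hC.eq_of_null (hC.shift_spec x x t)).symm

theorem shift_shift_apply (a x y : X) : hC.shift a (hC.shift x y a) = hC.shift x y :=
  (hC.shift_congr (hC.shift_spec x y a)).symm

theorem shift_mul_shift_of_le {x y z : X} (hxy : x ≤ y) (hyz : y ≤ z) :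
    hC.shift y z * hC.shift x y = hC.shift x z := by
  rcases hxy.eq_or_lt with rfl | hxy
  · rw [shift_self, mul_one]
  rcases hyz.eq_or_lt with rfl | hyz
  · rw [shift_self, one_mul]
  exact Equiv.ext fun t => (hC.shift_apply_eq_iff.2 <|
    hC.add hxy hyz (hC.shift_spec x y t) (hC.shift_spec y z _)).symm

theorem shift_mul_shift (x y z : X) : hC.shift y z * hC.shift x y = hC.shift x z := by
  wlog hxz : x ≤ z generalizing x z
  · rw [← inv_inj, mul_inv_rev]
    exact this z x (le_of_not_ge hxz)
  rcases le_total x y with hxy | hyx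
  · rcases le_total y z with hyz | hzy
    · exact hC.shift_mul_shift_of_le hxy hyz
    · rw [← hC.shift_inv z y, inv_mul_eq_iff_eq_mul]
      exact (hC.shift_mul_shift_of_le hxz hzy).symm
  · rw [← hC.shift_inv y x, mul_inv_eq_iff_eq_mul]
    exact (hC.shift_mul_shift_of_le hyx hxz).symm

-- Once `[c, d]` is laid off from `b`, both orders of composition give the shift by the whole span.
theorem commute_shift_of_lt {a b c d : X} (hab : a < b) (hcd : c < d) :
    Commute (hC.shift a b) (hC.shift c d) := by
  obtain ⟨e, hbe, -⟩ := hC.motion c d b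
  rw [hC.shift_congr hbe]
  have hlt : b < e := hC.lt_of_lt hcd hbe
  calc hC.shift a b * hC.shift b e = hC.shift a e :=
        Equiv.ext fun t => (hC.shift_apply_eq_iff.2 <|
          hC.add_crossed hab hlt (hC.shift_spec a b _) (hC.shift_spec b e t)).symm
    _ = hC.shift b e * hC.shift a b := (hC.shift_mul_shift a b e).symm

theorem commute_shift (a b c d : X) : Commute (hC.shift a b) (hC.shift c d) := by
  have of_lt_left {a b : X} (hab : a < b) : Commute (hC.shift a b) (hC.shift c d) := by
    rcases lt_trichotomy c d with hcd | rfl | hdc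
    · exact hC.commute_shift_of_lt hab hcd
    · rw [shift_self]; exact .one_right _
    · exact (hC.commute_shift_of_lt hab hdc).inv_right
  rcases lt_trichotomy a b with hab | rfl | hba
  · exact of_lt_left hab
  · rw [shift_self]; exact .one_left _
  · exact (of_lt_left hba).inv_left

theorem shift_apply_shift_apply (x y u v : X) :
    hC.shift (hC.shift x y u) (hC.shift x y v) = hC.shift u v := by
  set u' := hC.shift x y u
  set v' := hC.shift x y v
  calc hC.shift u' v' = hC.shift v v' * (hC.shift u v * hC.shift u' u) := by
        rw [shift_mul_shift, shift_mul_shift]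
    _ = hC.shift x y * (hC.shift u v * (hC.shift x y)⁻¹) := by
        rw [← hC.shift_inv u u', shift_shift_apply, shift_shift_apply]
    _ = hC.shift u v := by
        rw [(hC.commute_shift u v x y).inv_right.eq, mul_inv_cancel_left]

theorem strictMono_shift (x y : X) : StrictMono (hC.shift x y) := fun u v huv =>
  hC.lt_of_lt huv <| hC.shift_apply_eq_iff.1 <| by
    rw [← hC.shift_apply_shift_apply x y u v, shift_apply_left]

/-- The group of intervals, each represented by its endpoint when it is laid off from the origin
`o`. -/
noncomputable abbrev addCommGroup (o : X) : AddCommGroup X :=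
  letI : Add X := ⟨fun x y => hC.shift o x y⟩
  letI : Zero X := ⟨o⟩
  letI : Neg X := ⟨fun x => hC.shift x o o⟩
  have shift_add (x y : X) : hC.shift o (x + y) = hC.shift o x * hC.shift o y := by
    rw [← hC.shift_mul_shift o y (x + y)]
    exact congrArg (· * _) (hC.shift_shift_apply y o x)
  { add_assoc x y z := DFunLike.congr_fun (shift_add x y) z
    zero_add := DFunLike.congr_fun (hC.shift_self o)
    add_zero := hC.shift_apply_left o
    neg_add_cancel x := by
      change hC.shift o (hC.shift x o o) x = o
      rw [shift_shift_apply, shift_apply_left]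
    add_comm x y := by
      have h := DFunLike.congr_fun (hC.commute_shift o x o y).eq o
      rwa [Equiv.Perm.mul_apply, Equiv.Perm.mul_apply, shift_apply_left, shift_apply_left] at h
    nsmul := nsmulRec
    zsmul := zsmulRec }

theorem isOrderedAddMonoid (o : X) :
    letI := hC.addCommGroup o
    IsOrderedAddMonoid X :=
  letI := hC.addCommGroup o
  { add_le_add_left _ _ h z := by
      rw [add_comm _ z, add_comm _ z]
      exact (hC.strictMono_shift o z).monotone h }

theorem exists_midpoint_of_linearOrder [DenselyOrdered X] (hX : DedekindContinuous X) (a b : X) :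
    ∃ m, C a m m b := by
  let := hC.addCommGroup a
  have := hC.isOrderedAddMonoid a
  obtain ⟨m, hm⟩ := hX.exists_nsmul_eq two_ne_zero b
  rw [two_nsmul] at hm
  exact ⟨m, hC.shift_apply_eq_iff.1 hm⟩

end LinearOrder

section Preorder

variable {S : Type*} [Preorder S] {C : S → S → S → S → Prop}

theorem antisymmetrization (hC : IsIntervalCongruence C) :
    IsIntervalCongruence fun a b c d : Antisymmetrization S (· ≤ ·) =>
      C (ofAntisymmetrization _ a) (ofAntisymmetrization _ b)
        (ofAntisymmetrization _ c) (ofAntisymmetrization _ d) where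
  of_antisymmRel ha hb := hC.of_antisymmRel (.of_eq (congrArg _ ha.eq)) (.of_eq (congrArg _ hb.eq))
  trans := hC.trans
  motion x y a := by
    obtain ⟨b, hb, hunique⟩ := hC.motion (ofAntisymmetrization _ x) (ofAntisymmetrization _ y)
      (ofAntisymmetrization _ a)
    have hout := antisymmRel_ofAntisymmetrization_toAntisymmetrization b
    refine ⟨toAntisymmetrization _ b, hC.trans hb (hC.of_antisymmRel .rfl hout.symm),
      fun b' hb' => ?_⟩
    rw [← toAntisymmetrization_ofAntisymmetrization _ b']
    exact hunique _ hb'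
  lt_of_lt hab h := ofAntisymmetrization_lt_ofAntisymmetrization_iff.1
    (hC.lt_of_lt (ofAntisymmetrization_lt_ofAntisymmetrization_iff.2 hab) h)
  reverse_iff hab := hC.reverse_iff (ofAntisymmetrization_lt_ofAntisymmetrization_iff.2 hab)
  add hab hbc := hC.add (ofAntisymmetrization_lt_ofAntisymmetrization_iff.2 hab)
    (ofAntisymmetrization_lt_ofAntisymmetrization_iff.2 hbc)
  add_crossed hab hbc := hC.add_crossed (ofAntisymmetrization_lt_ofAntisymmetrization_iff.2 hab)
    (ofAntisymmetrization_lt_ofAntisymmetrization_iff.2 hbc)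

open Classical in
theorem exists_midpoint [Std.Total (α := S) (· ≤ ·)] [DenselyOrdered S]
    (hC : IsIntervalCongruence C) (hS : DedekindContinuous S) (a b : S) : ∃ m, C a m m b := by
  have := denselyOrdered_antisymmetrization (S := S)
  obtain ⟨m, hm⟩ := hC.antisymmetrization.exists_midpoint_of_linearOrder hS.antisymmetrization
    (toAntisymmetrization _ a) (toAntisymmetrization _ b)
  have ha := antisymmRel_ofAntisymmetrization_toAntisymmetrization a
  have hb := antisymmRel_ofAntisymmetrization_toAntisymmetrization b
  exact ⟨_, hC.trans (hC.of_antisymmRel ha.symm .rfl) (hC.trans hm (hC.of_antisymmRel .rfl hb))⟩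

end Preorder

end IsIntervalCongruence

section Pitch

variable {S : Type*} {L : S → S → Prop}

theorem lt_or_lt_of_separation (trans : ∀ x y z, L x y → L y z → L x z)
    (separation : ∀ x y z, L x y → ¬ (Ident L x z ∧ Ident L y z)) {x z : S} (y : S) (h : L x z) :
    L x y ∨ L y z := by
  by_contra! hy
  exact separation x z y h ⟨⟨hy.1, fun hyx => hy.2 (trans y x z hyx h)⟩,
    fun hzy => hy.1 (trans x z y h hzy), hy.2⟩

/-- The preorder of sounds by pitch, `x ≤ y` meaning that `y` is not lower-pitched than `x`. -/
abbrev pitchPreorder (irrefl : ∀ x, ¬ L x x) (trans : ∀ x y z, L x y → L y z → L x z)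
    (separation : ∀ x y z, L x y → ¬ (Ident L x z ∧ Ident L y z)) : Preorder S where
  lt := L
  le x y := ¬ L y x
  le_refl := irrefl
  le_trans _ y _ hyx hzy hzx := (lt_or_lt_of_separation trans separation y hzx).elim hzy hyx
  lt_iff_le_not_ge x y :=
    ⟨fun h => ⟨fun hyx => irrefl x (trans x y x h hyx), not_not_intro h⟩, fun h => not_not.1 h.2⟩

end Pitch

theorem stmt_9 {S : Type*} (L : S → S → Prop) (C : S → S → S → S → Prop)
    (A1 : ∀ x : S, ¬ L x x)
    (A2 : ∀ x y z : S, L x y → L y z → L x z)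
    (A3 : ∃ x y : S, L x y)
    (A4 : ∀ x y z : S, L x y → ¬ (Ident L x z ∧ Ident L y z))
    (A5a : ∀ x : S, ∃ a b : S, L a x ∧ L x b)
    (A5b : ∀ x y : S, L x y → ∃ a : S, L x a ∧ L a y)
    (C1 : ∀ a a' b b' : S, Ident L a a' → Ident L b b' → C a b a' b')
    (C2 : ∀ a b c d e f : S, C a b c d → C c d e f → C a b e f)
    (C3 : ∀ x y a : S, ∃ b : S, C x y a b ∧ ∀ b' : S, C x y a b' → Ident L b b')
    (C4a : ∀ a b c d : S, L a b → C a b c d → L c d)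
    (C4b : ∀ a b c d : S, L a b → (C a b c d ↔ C b a d c))
    (C5a : ∀ a b c a' b' c' : S, L a b → L b c → C a b a' b' → C b c b' c' → C a c a' c')
    (C5b : ∀ a b c a' b' c' : S, L a b → L b c → C a b b' a' → C b c c' b' → C a c c' a')
    (D : ∀ P Q : Set S, P.Nonempty → Q.Nonempty → Disjoint P Q → P ∪ Q = Set.univ →
      (∀ p ∈ P, ∀ q ∈ Q, ¬ L q p) →
      ∃ θ : S, (∀ x : S, L x θ → x ∈ P) ∧ (∀ x : S, L θ x → x ∈ Q)) :
    ∀ a b : S, ∃ m : S, C a m m b := by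
  let := pitchPreorder A1 A2 A4
  have antisymmRel_iff (x y : S) : AntisymmRel (· ≤ ·) x y ↔ Ident L x y := And.comm
  have : Std.Total (α := S) (· ≤ ·) :=
    ⟨fun x y => or_iff_not_imp_left.2 fun h hxy => A1 x (A2 x y x hxy (not_not.1 h))⟩
  have : DenselyOrdered S := ⟨A5b⟩
  have congruence : IsIntervalCongruence C :=
    { of_antisymmRel := fun ha hb => C1 _ _ _ _ ha.symm hb.symm
      trans := C2 _ _ _ _ _ _
      motion := by simpa only [antisymmRel_iff] using C3
      lt_of_lt := C4a _ _ _ _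
      reverse_iff := C4b _ _ _ _
      add := C5a _ _ _ _ _ _
      add_crossed := C5b _ _ _ _ _ _ }
  exact congruence.exists_midpoint D
end

section
/- Tonality Characterization: fix a real number k > 1 (the measure of octave intervals). Let E be an equivalence relation on the positive real numbers such that for every x > 0 the set {y : x < y ∧ E x y} has a least element, equal to k·x. Then for all x, y > 0: E x y if and only if y = k^n · x for some integer n. -/
/-!
The powers of the octave step move every point within its own class. Conversely, the powers of the
step applied to `x` cut the line into half-open intervals, each running from a point equivalent to
`x` to the octave of that point; by minimality of the octave, a point equivalent to `x` in such an
interval can only be its left endpoint.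
-/

open Set

/-- `y` is the octave of `x` for the equitonality relation `r`: the least of the points above `x`
that are related to `x`. -/
def IsOctave {α : Type*} [Preorder α] (r : α → α → Prop) (x y : α) : Prop :=
  IsLeast {z | x < z ∧ r x z} y

namespace IsOctave

variable {α : Type*} {r : α → α → Prop} {x y z : α}

theorem lt [Preorder α] (h : IsOctave r x y) : x < y :=
  h.1.1

theorem rel [Preorder α] (h : IsOctave r x y) : r x y :=
  h.1.2

theorem eq_of_rel_of_mem_Ico [PartialOrder α] (h : IsOctave r x y) (hxz : r x z)
    (hz : z ∈ Ico x y) : z = x := by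
  by_contra hne
  exact (h.2 ⟨hz.1.lt_of_ne' hne, hxz⟩).not_gt hz.2

end IsOctave

section MulAction

variable {G α : Type*} [Group G] [MulAction G α] {r : α → α → Prop} {g : G}

theorem rel_zpow_smul (hr : Equivalence r) (hg : ∀ x, r x (g • x)) (n : ℤ) (x : α) :
    r x (g ^ n • x) := by
  refine zpow_induction_left (P := fun a ↦ r x (a • x)) ?_ (fun a ha ↦ ?_) (fun a ha ↦ ?_) n
  · simpa only [one_smul] using hr.refl x
  · simpa only [mul_smul] using hr.trans ha (hg (a • x))
  · have hinv : r ((g⁻¹ * a) • x) (a • x) := by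
      simpa only [mul_smul, smul_inv_smul] using hg ((g⁻¹ * a) • x)
    exact hr.trans ha (hr.symm hinv)

theorem rel_iff_exists_eq_zpow_smul [PartialOrder α] (hr : Equivalence r)
    (hg : ∀ x, IsOctave r x (g • x)) {x y : α}
    (hxy : ∃ n : ℤ, y ∈ Ico (g ^ n • x) (g • g ^ n • x)) :
    r x y ↔ ∃ n : ℤ, y = g ^ n • x := by
  have hpow (n : ℤ) : r x (g ^ n • x) := rel_zpow_smul hr (fun z ↦ (hg z).rel) n x
  constructor
  · intro hrxy
    obtain ⟨n, hn⟩ := hxy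
    exact ⟨n, (hg _).eq_of_rel_of_mem_Ico (hr.trans (hr.symm (hpow n)) hrxy) hn⟩
  · rintro ⟨n, rfl⟩
    exact hpow n

end MulAction

theorem exists_mem_Ico_zpow_mul {G : Type*} [CommGroup G] [LinearOrder G] [IsOrderedMonoid G]
    [MulArchimedean G] {k : G} (hk : 1 < k) (x y : G) :
    ∃ n : ℤ, y ∈ Ico (k ^ n * x) (k * (k ^ n * x)) := by
  obtain ⟨n, ⟨hle, hlt⟩, -⟩ := existsUnique_zpow_near_of_one_lt hk (y / x)
  refine ⟨n, le_div_iff_mul_le.mp hle, ?_⟩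
  rwa [div_lt_iff_lt_mul, add_comm, zpow_one_add, mul_assoc] at hlt

instance instMulArchimedeanPos {R : Type*} [CommSemiring R] [PartialOrder R] [IsStrictOrderedRing R]
    [ExistsAddOfLE R] [Archimedean R] : MulArchimedean {x : R // 0 < x} :=
  ⟨fun x _ hy ↦ (pow_unbounded_of_one_lt (x : R) hy).imp fun _ h ↦ h.le⟩

theorem stmt_17_general {G : Type*} [CommGroup G] [LinearOrder G] [IsOrderedMonoid G]
    [MulArchimedean G] {k : G} {r : G → G → Prop} (hr : Equivalence r)
    (hoct : ∀ x, IsOctave r x (k * x)) (x y : G) :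
    r x y ↔ ∃ n : ℤ, y = k ^ n * x := by
  have hk : 1 < k := by simpa only [mul_one] using (hoct 1).lt
  exact rel_iff_exists_eq_zpow_smul (g := k) hr hoct (exists_mem_Ico_zpow_mul hk x y)

theorem stmt_17 (k : ℝ) (hk : 1 < k) (E : ℝ → ℝ → Prop)
    (hrefl : ∀ x : ℝ, 0 < x → E x x)
    (hsymm : ∀ x y : ℝ, 0 < x → 0 < y → E x y → E y x)
    (htrans : ∀ x y z : ℝ, 0 < x → 0 < y → 0 < z → E x y → E y z → E x z)
    (hoct : ∀ x : ℝ, 0 < x → IsLeast {y : ℝ | x < y ∧ E x y} (k * x)) :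
    ∀ x y : ℝ, 0 < x → 0 < y → (E x y ↔ ∃ n : ℤ, y = k ^ n * x) := by
  intro x y hx hy
  have hE : Equivalence fun s t : {x : ℝ // 0 < x} ↦ E s t :=
    ⟨fun s ↦ hrefl s s.2, fun {s t} ↦ hsymm s t s.2 t.2,
      fun {s t u} ↦ htrans s t u s.2 t.2 u.2⟩
  simpa only [Subtype.ext_iff, Positive.val_mul, Positive.coe_zpow] using
    stmt_17_general (k := ⟨k, zero_lt_one.trans hk⟩) hE
      (fun s ↦ ⟨(hoct s s.2).1, fun _ ht ↦ (hoct s s.2).2 ht⟩) ⟨x, hx⟩ ⟨y, hy⟩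
end

section
/- A heptatonic diatonic scale is maximally even if and only if it is a circular rearrangement of the major scale. Concretely: let a : ZMod 7 → ℕ with a i ∈ {1, 2} for every i and ∑ i, a i = 12 (the step of size m representing the harmonic interval ε^m, ε = 2^(1/12), with the seven steps multiplying to an octave). Then the following are equivalent: (i) [maximal evenness] for every m with 1 ≤ m ≤ 7 there exists n ∈ ℕ such that for every i ∈ ZMod 7 the cyclic window sum a(i) + a(i+1) + ⋯ + a(i+m-1) equals n or n+1; (ii) there exists t ∈ ZMod 7 such that the sequence (a(t), a(t+1), a(t+2), a(t+3), a(t+4), a(t+5), a(t+6)) equals (2, 2, 1, 2, 2, 2, 1). -/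
/-!
Let `c` be the sum of the `n` steps `a`. The cyclic windows of length `m` have mean sum `c * m / n`,
so if their sums take two consecutive values, each of them exceeds `c * m / n - 1`. The steps
`n * a i - c` sum to zero, so the cycle lemma gives a starting point `t` from which no window sum
exceeds the mean; hence the windows starting at `t` have sums exactly `⌊c * m / n⌋`. Conversely,
increments of `k ↦ ⌊c * k / n⌋` over `m` steps are `⌊c * m / n⌋` or one more. For `n = 7` and
`c = 12`, the floors give the steps `1, 2, 2, 1, 2, 2, 2`: the major scale entered one step early.
-/

/-- The sum of the `m` cyclically consecutive terms of `f` starting at `i`; the window may wrap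
around the cycle any number of times. -/
def windowSum {M : Type*} [AddCommMonoid M] {n : ℕ} (f : ZMod n → M) (m : ℕ) (i : ZMod n) : M :=
  ∑ j ∈ Finset.range m, f (i + (j : ZMod n))

/-- Maximal evenness of a cyclic sequence of `n` steps: for each window length, the window sums take
at most two values, and these are consecutive. Steps are recorded by their exponents, so that
products of intervals become sums. -/
def IsMaximallyEven {n : ℕ} (a : ZMod n → ℕ) : Prop :=
  ∀ m : ℕ, 1 ≤ m → m ≤ n → ∃ v : ℕ, ∀ i : ZMod n, windowSum a m i = v ∨ windowSum a m i = v + 1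

/-- The heptatonic scale `a` read from the tonic `t` is the major scale, with `1` a half tone and
`2` a whole tone. -/
def IsMajorScaleFrom (a : ZMod 7 → ℕ) (t : ZMod 7) : Prop :=
  a t = 2 ∧ a (t + 1) = 2 ∧ a (t + 2) = 1 ∧ a (t + 3) = 2 ∧
    a (t + 4) = 2 ∧ a (t + 5) = 2 ∧ a (t + 6) = 1

section WindowSum

variable {M : Type*} [AddCommMonoid M] {n : ℕ}

theorem windowSum_add (f : ZMod n → M) (k m : ℕ) (i : ZMod n) :
    windowSum f (k + m) i = windowSum f k i + windowSum f m (i + k) := by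
  simp only [windowSum, Finset.sum_range_add, Nat.cast_add, add_assoc]

variable [NeZero n]

theorem windowSum_period (f : ZMod n → M) (i : ZMod n) : windowSum f n i = ∑ x, f x := by
  rw [← Equiv.sum_comp (Equiv.addLeft i) f]
  refine Finset.sum_nbij' (fun j : ℕ ↦ (j : ZMod n)) ZMod.val ?_ ?_ ?_ ?_ ?_
  · simp
  · simp [ZMod.val_lt]
  · exact fun j hj ↦ ZMod.val_cast_of_lt (Finset.mem_range.mp hj)
  · simp
  · simp

theorem windowSum_mul_period_add (f : ZMod n → M) (q k : ℕ) (i : ZMod n) :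
    windowSum f (n * q + k) i = q • ∑ x, f x + windowSum f k i := by
  induction q with
  | zero => simp
  | succ q ih =>
    rw [show n * (q + 1) + k = n + (n * q + k) by ring, windowSum_add, windowSum_period,
      ZMod.natCast_self, add_zero, ih, succ_nsmul', add_assoc]

theorem sum_windowSum (f : ZMod n → M) (m : ℕ) : ∑ i, windowSum f m i = m • ∑ x, f x := by
  have sum_translate (j : ℕ) : ∑ i, f (i + (j : ZMod n)) = ∑ x, f x :=
    Equiv.sum_comp (Equiv.addRight (j : ZMod n)) f
  simp only [windowSum]
  rw [Finset.sum_comm]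
  simp only [sum_translate, Finset.sum_const, Finset.card_range]

/-- The cycle lemma: start right after a point where the partial sums are largest. -/
theorem exists_forall_windowSum_nonpos {G : Type*} [AddCommGroup G] [LinearOrder G]
    [IsOrderedAddMonoid G] (f : ZMod n → G) (hf : ∑ x, f x = 0) :
    ∃ t, ∀ k, windowSum f k t ≤ 0 := by
  obtain ⟨t, ht⟩ := Finite.exists_max fun x : ZMod n ↦ windowSum f x.val 0
  refine ⟨t, fun k ↦ ?_⟩
  have wrap : windowSum f (t.val + k) 0 = windowSum f (t + k).val 0 := by
    have hval : (t + k).val = (t.val + k) % n := by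
      rw [← ZMod.val_natCast, Nat.cast_add, ZMod.natCast_zmod_val]
    rw [hval, ← Nat.div_add_mod (t.val + k) n, windowSum_mul_period_add, hf, smul_zero, zero_add,
      Nat.div_add_mod]
  have split : windowSum f (t.val + k) 0 = windowSum f t.val 0 + windowSum f k t := by
    rw [windowSum_add, zero_add, ZMod.natCast_zmod_val]
  have hle : windowSum f t.val 0 + windowSum f k t ≤ windowSum f t.val 0 := by
    rw [← split, wrap]
    exact ht (t + k)
  exact (add_le_iff_nonpos_right _).mp hle

end WindowSum

section MaximallyEven

variable {n : ℕ} [NeZero n] {a : ZMod n → ℕ}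

theorem exists_forall_mul_windowSum_le (a : ZMod n → ℕ) :
    ∃ t, ∀ k, n * windowSum a k t ≤ (∑ x, a x) * k := by
  obtain ⟨t, ht⟩ := exists_forall_windowSum_nonpos
    (fun x ↦ (n : ℤ) * a x - ∑ y, (a y : ℤ)) (by simp [Finset.mul_sum])
  refine ⟨t, fun k ↦ ?_⟩
  have hk := ht k
  simp only [windowSum, Finset.sum_sub_distrib, ← Finset.mul_sum, Finset.sum_const,
    Finset.card_range, nsmul_eq_mul, sub_nonpos] at hk
  rw [windowSum, mul_comm _ k]
  exact_mod_cast hk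

theorem IsMaximallyEven.mul_lt_mul_windowSum_add_one (ha : IsMaximallyEven a) {m : ℕ} (hm : m ≤ n)
    (i : ZMod n) : (∑ x, a x) * m < n * (windowSum a m i + 1) := by
  have le_add_one (j : ZMod n) : windowSum a m j ≤ windowSum a m i + 1 := by
    rcases m.eq_zero_or_pos with rfl | hpos
    · simp [windowSum]
    · obtain ⟨v, hv⟩ := ha m hpos hm
      have hi := hv i
      have hj := hv j
      omega
  calc (∑ x, a x) * m = ∑ j, windowSum a m j := by rw [sum_windowSum, smul_eq_mul, mul_comm]
    _ < ∑ _j : ZMod n, (windowSum a m i + 1) :=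
      Finset.sum_lt_sum (fun j _ ↦ le_add_one j) ⟨i, Finset.mem_univ i, Nat.lt_succ_self _⟩
    _ = n * (windowSum a m i + 1) := by
      rw [Finset.sum_const, Finset.card_univ, ZMod.card, smul_eq_mul]

theorem windowSum_eq_div_of_forall_lt {t : ZMod n}
    (h : ∀ k < n, windowSum a k t = (∑ x, a x) * k / n) (k : ℕ) :
    windowSum a k t = (∑ x, a x) * k / n := by
  have hn : 0 < n := NeZero.pos n
  rw [← Nat.div_add_mod k n, windowSum_mul_period_add, h _ (Nat.mod_lt k hn), mul_add,
    mul_left_comm, Nat.mul_add_div hn, smul_eq_mul, mul_comm (k / n)]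

theorem IsMaximallyEven.of_windowSum_eq_div {t : ZMod n}
    (h : ∀ k, windowSum a k t = (∑ x, a x) * k / n) : IsMaximallyEven a := by
  refine fun m _ _ ↦ ⟨(∑ x, a x) * m / n, fun i ↦ ?_⟩
  obtain ⟨p, rfl⟩ : ∃ p : ℕ, i = t + p := ⟨(i - t).val, by simp⟩
  have hadd := windowSum_add a p m t
  rw [h, h, mul_add, Nat.add_div (NeZero.pos n)] at hadd
  split_ifs at hadd <;> omega

/-- The Clough–Douthett description of maximally even sets. -/
theorem isMaximallyEven_iff_exists_windowSum_eq_div :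
    IsMaximallyEven a ↔ ∃ t, ∀ k < n, windowSum a k t = (∑ x, a x) * k / n := by
  constructor
  · intro ha
    obtain ⟨t, ht⟩ := exists_forall_mul_windowSum_le a
    refine ⟨t, fun k hk ↦ (Nat.div_eq_of_lt_le ?_ ?_).symm⟩
    · rw [mul_comm]
      exact ht k
    · rw [mul_comm _ n]
      exact ha.mul_lt_mul_windowSum_add_one hk.le t
  · rintro ⟨t, ht⟩
    exact .of_windowSum_eq_div (windowSum_eq_div_of_forall_lt ht)

end MaximallyEven

theorem forall_windowSum_eq_div_iff_isMajorScaleFrom_add_one {a : ZMod 7 → ℕ}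
    (hsum : ∑ i, a i = 12) (t : ZMod 7) :
    (∀ k < 7, windowSum a k t = 12 * k / 7) ↔ IsMajorScaleFrom a (t + 1) := by
  have htotal : a t + a (t + 1) + a (t + 2) + a (t + 3) + a (t + 4) + a (t + 5) + a (t + 6) =
      12 := by
    simpa [windowSum, Finset.sum_range_succ] using (windowSum_period a t).trans hsum
  have hpartial : (∀ k < 7, windowSum a k t = 12 * k / 7) ↔
      a t = 1 ∧ a t + a (t + 1) = 3 ∧ a t + a (t + 1) + a (t + 2) = 5 ∧
        a t + a (t + 1) + a (t + 2) + a (t + 3) = 6 ∧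
        a t + a (t + 1) + a (t + 2) + a (t + 3) + a (t + 4) = 8 ∧
        a t + a (t + 1) + a (t + 2) + a (t + 3) + a (t + 4) + a (t + 5) = 10 := by
    simp only [Nat.forall_lt_succ_right]
    simp [windowSum, Finset.sum_range_succ, and_assoc]
  have hmajor : IsMajorScaleFrom a (t + 1) ↔
      a (t + 1) = 2 ∧ a (t + 2) = 2 ∧ a (t + 3) = 1 ∧ a (t + 4) = 2 ∧ a (t + 5) = 2 ∧
        a (t + 6) = 2 ∧ a t = 1 := by
    have hwrap : t + (1 + 6) = t := by rw [show (1 + 6 : ZMod 7) = 0 from rfl, add_zero]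
    simp only [IsMajorScaleFrom, add_assoc, hwrap]
    norm_num only
  rw [hpartial, hmajor]
  omega

theorem stmt_18_general (a : ZMod 7 → ℕ) (hsum : ∑ i : ZMod 7, a i = 12) :
    (∀ m : ℕ, 1 ≤ m → m ≤ 7 → ∃ n : ℕ, ∀ i : ZMod 7,
        (∑ j ∈ Finset.range m, a (i + (j : ZMod 7))) = n ∨
        (∑ j ∈ Finset.range m, a (i + (j : ZMod 7))) = n + 1) ↔
    (∃ t : ZMod 7, a t = 2 ∧ a (t + 1) = 2 ∧ a (t + 2) = 1 ∧ a (t + 3) = 2 ∧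
      a (t + 4) = 2 ∧ a (t + 5) = 2 ∧ a (t + 6) = 1) := by
  calc IsMaximallyEven a
    _ ↔ ∃ t, ∀ k < 7, windowSum a k t = 12 * k / 7 :=
      hsum ▸ isMaximallyEven_iff_exists_windowSum_eq_div
    _ ↔ ∃ t, IsMajorScaleFrom a t := (Equiv.addRight 1).exists_congr
      (forall_windowSum_eq_div_iff_isMajorScaleFrom_add_one hsum)

theorem stmt_18 (a : ZMod 7 → ℕ)
    (hstep : ∀ i : ZMod 7, a i = 1 ∨ a i = 2)
    (hsum : ∑ i : ZMod 7, a i = 12) :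
    (∀ m : ℕ, 1 ≤ m → m ≤ 7 → ∃ n : ℕ, ∀ i : ZMod 7,
        (∑ j ∈ Finset.range m, a (i + (j : ZMod 7))) = n ∨
        (∑ j ∈ Finset.range m, a (i + (j : ZMod 7))) = n + 1) ↔
    (∃ t : ZMod 7, a t = 2 ∧ a (t + 1) = 2 ∧ a (t + 2) = 1 ∧ a (t + 3) = 2 ∧
      a (t + 4) = 2 ∧ a (t + 5) = 2 ∧ a (t + 6) = 1) :=
  stmt_18_general a hsum
end
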